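/- Let T(N) denote the number of congruence classes of unordered triples of pairwise distinct points of the grid [N]×[N] ⊆ ℝ². Then liminf over N → ∞ of T(N)/N⁴ is at least 0.1558. -/

import Mathlib

open Real

noncomputable section

/-- The Euclidean plane. -/
abbrev Plane : Type := EuclideanSpace ℝ (Fin 2)

/-- A point of the plane from coordinates. -/
def pt (x y : ℝ) : Plane := (WithLp.equiv 2 (Fin 2 → ℝ)).symm ![x, y]

/-- The embedding of the integer lattice `ℤ²` into the plane. -/
def toPlane (P : ℤ × ℤ) : Plane := pt P.1 P.2

/-- Membership in the grid `[N] × [N] = {0, 1, …, N-1}²`. -/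
def inGrid (N : ℕ) (P : ℤ × ℤ) : Prop := 0 ≤ P.1 ∧ P.1 < N ∧ 0 ≤ P.2 ∧ P.2 < N

/-- Two sets of points in the plane are congruent if some isometry of `ℝ²`
maps one onto the other. -/
def Cong (S T : Set Plane) : Prop := ∃ f : Plane ≃ᵢ Plane, f '' S = T

/-- The unordered triples of pairwise distinct points of the grid `[N] × [N]`,
viewed as subsets of the plane. -/
def gridTriples (N : ℕ) : Set (Set Plane) :=
  {s | ∃ a b c : ℤ × ℤ, inGrid N a ∧ inGrid N b ∧ inGrid N c ∧
    a ≠ b ∧ a ≠ c ∧ b ≠ c ∧ s = {toPlane a, toPlane b, toPlane c}}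

/-- `T N` is the number of congruence classes of unordered triples of pairwise
distinct points of the grid `[N] × [N]`. -/
def T (N : ℕ) : ℕ :=
  ((fun t => {t' ∈ gridTriples N | Cong t t'}) '' gridTriples N).ncard


lemma key_prime {a b c x y X Y x' X' : ℤ} (hc : 1 < c) (habc : a^2+b^2 = c^2)
    (hg : ∀ p : ℕ, p.Prime → (p:ℤ) ∣ a → (p:ℤ) ∣ b → (p:ℤ) ∣ c → False)
    (h1 : c * x' = a*x - b*y) (h3 : c * X' = a*X - b*Y) :
    ∃ p r : ℕ, p.Prime ∧ p % 4 = 1 ∧ r < p ∧ p ∣ r^2+1 ∧ (p:ℤ) ∣ x + r*y ∧ (p:ℤ) ∣ X + r*Y := by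
  obtain ⟨p, hpp, hpc⟩ := Nat.exists_prime_and_dvd (n := c.natAbs) (by omega)
  have hpc : (p:ℤ) ∣ c := Int.natCast_dvd.mpr hpc
  have : Fact p.Prime := ⟨hpp⟩
  have hpI : Prime (p:ℤ) := Nat.prime_iff_prime_int.mp hpp
  have hpa : ¬ (p:ℤ) ∣ a := by
    intro h
    have : (p:ℤ) ∣ b^2 := by
      have : b^2 = c*c - a*a := by linarith
      rw [this]
      exact dvd_sub (hpc.mul_right _) (h.mul_right _)
    exact hg p hpp h (hpI.dvd_of_dvd_pow this) hpc
  have hpb : ¬ (p:ℤ) ∣ b := by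
    intro h
    have : (p:ℤ) ∣ a^2 := by
      have : a^2 = c*c - b*b := by linarith
      rw [this]
      exact dvd_sub (hpc.mul_right _) (h.mul_right _)
    exact hg p hpp (hpI.dvd_of_dvd_pow this) h hpc
  have za : (a : ZMod p) ≠ 0 := by rwa [Ne, ZMod.intCast_zmod_eq_zero_iff_dvd]
  have zc : (c : ZMod p) = 0 := by rwa [ZMod.intCast_zmod_eq_zero_iff_dvd]
  have zabc : (a : ZMod p)^2 + (b : ZMod p)^2 = 0 := by
    have := congrArg (Int.cast : ℤ → ZMod p) habc
    push_cast at this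
    rw [this, zc]; ring
  set ρ : ZMod p := - (b : ZMod p) * (a : ZMod p)⁻¹ with hρ
  have hρ2 : ρ^2 = -1 := by
    rw [hρ]; field_simp; linear_combination zabc
  have e1 : (x : ZMod p) + ρ * y = 0 := by
    have := congrArg (Int.cast : ℤ → ZMod p) h1
    push_cast at this
    rw [zc] at this
    rw [hρ]; field_simp; linear_combination -this
  have e2 : (X : ZMod p) + ρ * Y = 0 := by
    have := congrArg (Int.cast : ℤ → ZMod p) h3
    push_cast at this
    rw [zc] at this
    rw [hρ]; field_simp; linear_combination -this
  have hr : ((ρ.val : ℕ) : ZMod p) = ρ := ZMod.natCast_zmod_val ρ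
  refine ⟨p, ρ.val, hpp, ?_, ZMod.val_lt ρ, ?_, ?_, ?_⟩
  · have h3 := ZMod.mod_four_ne_three_of_sq_eq_neg_one hρ2
    have h2 : p ≠ 2 := by
      rintro rfl
      have a1 : a % 2 = 1 := by have := hpa; omega
      have b1 : b % 2 = 1 := by have := hpb; omega
      obtain ⟨k, rfl⟩ := hpc
      obtain ⟨u, rfl⟩ : ∃ u, a = 2*u+1 := ⟨a/2, by omega⟩
      obtain ⟨v, rfl⟩ : ∃ v, b = 2*v+1 := ⟨b/2, by omega⟩
      have : 2*(2 * (k^2 - u^2-u-v^2-v)) = 2 := by push_cast at habc; linarith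
      omega
    have := hpp.eq_two_or_odd
    omega
  · rw [← ZMod.natCast_eq_zero_iff]; push_cast; rw [hr, hρ2]; ring
  · rw [← ZMod.intCast_zmod_eq_zero_iff_dvd]; push_cast; rw [hr, e1]
  · rw [← ZMod.intCast_zmod_eq_zero_iff_dvd]; push_cast; rw [hr, e2]

lemma unit_cases {a b : ℤ} (h : a^2+b^2=1) :
    (a = 1 ∧ b = 0) ∨ (a = -1 ∧ b = 0) ∨ (a = 0 ∧ b = 1) ∨ (a = 0 ∧ b = -1) := by
  have h1 : a ≤ 1 := by nlinarith [sq_nonneg b]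
  have h2 : -1 ≤ a := by nlinarith [sq_nonneg b]
  have h3 : b ≤ 1 := by nlinarith [sq_nonneg a]
  have h4 : -1 ≤ b := by nlinarith [sq_nonneg a]
  interval_cases a <;> interval_cases b <;> simp_all

def BadZ (x y X Y : ℤ) : Prop :=
  ∃ p r : ℕ, p.Prime ∧ p % 4 = 1 ∧ r < p ∧ p ∣ r^2+1 ∧ (p:ℤ) ∣ x + r*y ∧ (p:ℤ) ∣ X + r*Y

lemma rot_case {x y X Y x' y' X' Y' : ℤ} (hpos : 0 < x^2+y^2) (hn : x'^2+y'^2 = x^2+y^2)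
    (hd : x'*X'+y'*Y' = x*X+y*Y) (hdet : x'*Y'-y'*X' = x*Y-y*X) (hb : ¬ BadZ x y X Y) :
    (x' = x ∧ y' = y ∧ X' = X ∧ Y' = Y) ∨ (x' = -x ∧ y' = -y ∧ X' = -X ∧ Y' = -Y) ∨
    (x' = -y ∧ y' = x ∧ X' = -Y ∧ Y' = X) ∨ (x' = y ∧ y' = -x ∧ X' = Y ∧ Y' = -X) := by
  set A := x*x'+y*y' with hA
  set B := x*y'-y*x' with hB
  set C := x^2+y^2 with hC
  have hABC : A^2+B^2=C^2 := by
    have : A^2+B^2 = C*(x'^2+y'^2) := by rw [hA,hB,hC]; ring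
    rw [this, hn]; ring
  have e1 : C*x' = A*x-B*y := by rw [hA,hB,hC]; ring
  have e2 : C*y' = B*x+A*y := by rw [hA,hB,hC]; ring
  have e3 : C*X' = A*X-B*Y := by
    rw [← hn,hA,hB]; linear_combination x'*hd - y'*hdet
  have e4 : C*Y' = B*X+A*Y := by
    rw [← hn,hA,hB]; linear_combination y'*hd + x'*hdet
  clear_value A B C
  obtain ⟨g, a, b, c, hg, rfl, rfl, rfl, hco⟩ : ∃ g a b c : ℤ, 0 < g ∧ A = g*a ∧ B = g*b ∧ C = g*c ∧
      (∀ p : ℕ, p.Prime → (p:ℤ) ∣ a → (p:ℤ) ∣ b → (p:ℤ) ∣ c → False) := by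
    set g : ℕ := Nat.gcd (Int.gcd A B) C.natAbs with hg
    have hgpos : 0 < g := Nat.gcd_pos_of_pos_right _ (by omega)
    have gA : (g:ℤ) ∣ A := (Int.natCast_dvd_natCast.mpr (Nat.gcd_dvd_left _ _)).trans (Int.gcd_dvd_left _ _)
    have gB : (g:ℤ) ∣ B := (Int.natCast_dvd_natCast.mpr (Nat.gcd_dvd_left _ _)).trans (Int.gcd_dvd_right _ _)
    have gC : (g:ℤ) ∣ C := Int.natCast_dvd.mpr (Nat.gcd_dvd_right _ _)
    obtain ⟨a, ha⟩ := gA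
    obtain ⟨b, hb⟩ := gB
    obtain ⟨c, hc⟩ := gC
    refine ⟨g, a, b, c, by exact_mod_cast hgpos, ha, hb, hc, ?_⟩
    intro p hp pa pb pc
    have h1 : ((g*p : ℕ):ℤ) ∣ A := by rw [ha]; push_cast; exact mul_dvd_mul_left _ pa
    have h2 : ((g*p : ℕ):ℤ) ∣ B := by rw [hb]; push_cast; exact mul_dvd_mul_left _ pb
    have h3 : ((g*p : ℕ):ℤ) ∣ C := by rw [hc]; push_cast; exact mul_dvd_mul_left _ pc
    have : g*p ∣ g := by
      conv_rhs => rw [hg]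
      exact Nat.dvd_gcd (Int.dvd_gcd h1 h2 |> fun h => by exact_mod_cast h) (Int.natCast_dvd.mp h3)
    have := Nat.le_of_dvd hgpos this
    have := hp.two_le
    nlinarith
  have hg0 : g ≠ 0 := hg.ne'
  have q : a^2+b^2=c^2 := by
    have : g^2*(a^2+b^2) = g^2*c^2 := by linarith
    exact mul_left_cancel₀ (pow_ne_zero 2 hg0) this
  have f1 : c*x' = a*x-b*y := mul_left_cancel₀ hg0 (by linarith)
  have f2 : c*y' = b*x+a*y := mul_left_cancel₀ hg0 (by linarith)
  have f3 : c*X' = a*X-b*Y := mul_left_cancel₀ hg0 (by linarith)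
  have f4 : c*Y' = b*X+a*Y := mul_left_cancel₀ hg0 (by linarith)
  have hcpos : 0 < c := by
    by_contra h
    nlinarith
  rcases (show c = 1 ∨ 1 < c by omega) with h1 | h1
  · subst h1
    rcases unit_cases (by linarith : a^2+b^2=1) with ⟨rfl, rfl⟩ | ⟨rfl, rfl⟩ | ⟨rfl, rfl⟩ | ⟨rfl, rfl⟩
    · exact Or.inl ⟨by linarith, by linarith, by linarith, by linarith⟩
    · exact Or.inr (Or.inl ⟨by linarith, by linarith, by linarith, by linarith⟩)
    · exact Or.inr (Or.inr (Or.inl ⟨by linarith, by linarith, by linarith, by linarith⟩))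
    · exact Or.inr (Or.inr (Or.inr ⟨by linarith, by linarith, by linarith, by linarith⟩))
  · exact (hb (key_prime h1 q hco f1 f3)).elim

lemma iso_case {x y X Y x' y' X' Y' : ℤ} (hpos : 0 < x^2+y^2) (hn : x'^2+y'^2 = x^2+y^2)
    (hn2 : X'^2+Y'^2 = X^2+Y^2)
    (hd : x'*X'+y'*Y' = x*X+y*Y) (hb : ¬ BadZ x y X Y) :
    ((x' = x ∧ y' = y ∧ X' = X ∧ Y' = Y) ∨ (x' = -x ∧ y' = -y ∧ X' = -X ∧ Y' = -Y) ∨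
    (x' = -y ∧ y' = x ∧ X' = -Y ∧ Y' = X) ∨ (x' = y ∧ y' = -x ∧ X' = Y ∧ Y' = -X)) ∨
    ((x' = x ∧ y' = -y ∧ X' = X ∧ Y' = -Y) ∨ (x' = -x ∧ y' = y ∧ X' = -X ∧ Y' = Y) ∨
    (x' = -y ∧ y' = -x ∧ X' = -Y ∧ Y' = -X) ∨ (x' = y ∧ y' = x ∧ X' = Y ∧ Y' = X)) := by
  have hsq : (x'*Y'-y'*X')^2 = (x*Y-y*X)^2 := by
    have h1 : (x'*Y'-y'*X')^2 = (x'^2+y'^2)*(X'^2+Y'^2) - (x'*X'+y'*Y')^2 := by ring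
    rw [h1, hn, hn2, hd]; ring
  rcases sq_eq_sq_iff_eq_or_eq_neg.mp hsq with h | h
  · left; exact rot_case hpos hn hd h hb
  · right
    have := rot_case (x' := x') (y' := -y') (X' := X') (Y' := -Y') hpos (by linarith) (by linarith) (by linarith) hb
    clear h hsq hb hd hn hn2 hpos
    omega

def Lin (a b c d : ℤ) : Prop := 0 < c ∧ c < a ∧ 0 < b ∧ b < a ∧ 0 < d ∧ d < a ∧ b ≠ d

lemma combi {a b c d a' b' c' d' p0 q0 p1 q1 p2 q2 : ℤ} (h : Lin a b c d) (h' : Lin a' b' c' d')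
    (h0 : (p0 = 0 ∧ q0 = 0) ∨ (p0 = a' ∧ q0 = b') ∨ (p0 = c' ∧ q0 = d'))
    (h1 : (p1 = 0 ∧ q1 = 0) ∨ (p1 = a' ∧ q1 = b') ∨ (p1 = c' ∧ q1 = d'))
    (h2 : (p2 = 0 ∧ q2 = 0) ∨ (p2 = a' ∧ q2 = b') ∨ (p2 = c' ∧ q2 = d'))
    (hg : ((p1-p0 = a ∧ q1-q0 = b ∧ p2-p0 = c ∧ q2-q0 = d) ∨
      (p1-p0 = -a ∧ q1-q0 = -b ∧ p2-p0 = -c ∧ q2-q0 = -d) ∨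
      (p1-p0 = -b ∧ q1-q0 = a ∧ p2-p0 = -d ∧ q2-q0 = c) ∨
      (p1-p0 = b ∧ q1-q0 = -a ∧ p2-p0 = d ∧ q2-q0 = -c)) ∨
      ((p1-p0 = a ∧ q1-q0 = -b ∧ p2-p0 = c ∧ q2-q0 = -d) ∨
      (p1-p0 = -a ∧ q1-q0 = b ∧ p2-p0 = -c ∧ q2-q0 = d) ∨
      (p1-p0 = -b ∧ q1-q0 = -a ∧ p2-p0 = -d ∧ q2-q0 = -c) ∨
      (p1-p0 = b ∧ q1-q0 = a ∧ p2-p0 = d ∧ q2-q0 = c))) :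
    (a' = a ∧ b' = b ∧ c' = c ∧ d' = d) ∨ 
    (d < b ∧ a' = a ∧ b' = b ∧ c' = a - c ∧ d' = b - d) := by
  obtain ⟨l1, l2, l3, l4, l5, l6, l7⟩ := h
  obtain ⟨k1, k2, k3, k4, k5, k6, k7⟩ := h'
  rcases h0 with ⟨rfl, rfl⟩ | ⟨rfl, rfl⟩ | ⟨rfl, rfl⟩ <;>
  rcases h1 with ⟨rfl, rfl⟩ | ⟨rfl, rfl⟩ | ⟨rfl, rfl⟩ <;>
  rcases h2 with ⟨rfl, rfl⟩ | ⟨rfl, rfl⟩ | ⟨rfl, rfl⟩ <;>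
  rcases hg with (hg | hg | hg | hg) | (hg | hg | hg | hg) <;>
  omega

def Shape (a b c d : ℤ) : Prop := Lin a b c d ∧ (d < b → d * a < c * b)

lemma dist_toPlane (P Q : ℤ × ℤ) :
    dist (toPlane P) (toPlane Q) ^ 2 = (((P.1-Q.1)^2 + (P.2-Q.2)^2 : ℤ) : ℝ) := by
  rw [EuclideanSpace.dist_eq, Real.sq_sqrt (by positivity)]
  simp [Fin.sum_univ_two, toPlane, pt, Real.dist_eq, sq_abs]

def tri (a b c d : ℤ) : Set Plane := {toPlane (0,0), toPlane (a,b), toPlane (c,d)}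

lemma cong_tri {a b c d a' b' c' d' : ℤ} (h : Shape a b c d) (h' : Shape a' b' c' d')
    (hb : ¬ BadZ a b c d) (hc : Cong (tri a b c d) (tri a' b' c' d')) :
    a' = a ∧ b' = b ∧ c' = c ∧ d' = d := by
  obtain ⟨f, hf⟩ := hc
  have key : ∀ P, toPlane P ∈ tri a b c d → ∃ p q : ℤ, f (toPlane P) = toPlane (p, q) ∧
      ((p = 0 ∧ q = 0) ∨ (p = a' ∧ q = b') ∨ (p = c' ∧ q = d')) := by
    intro P hP
    have : f (toPlane P) ∈ tri a' b' c' d' := hf ▸ Set.mem_image_of_mem f hP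
    rcases this with h | h | h
    · exact ⟨0, 0, h, by simp⟩
    · exact ⟨a', b', h, by simp⟩
    · exact ⟨c', d', h, by simp⟩
  obtain ⟨p0, q0, e0, k0⟩ := key (0,0) (by simp [tri])
  obtain ⟨p1, q1, e1, k1⟩ := key (a,b) (by simp [tri])
  obtain ⟨p2, q2, e2, k2⟩ := key (c,d) (by simp [tri])
  have d01 : (p1-p0)^2+(q1-q0)^2 = a^2+b^2 := by
    have h1 := dist_toPlane (p1,q1) (p0,q0)
    have h2 := dist_toPlane (a,b) (0,0)
    rw [← e0, ← e1, f.isometry.dist_eq, h2] at h1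
    have := Int.cast_injective h1
    simp at this
    linarith
  have d02 : (p2-p0)^2+(q2-q0)^2 = c^2+d^2 := by
    have h1 := dist_toPlane (p2,q2) (p0,q0)
    have h2 := dist_toPlane (c,d) (0,0)
    rw [← e0, ← e2, f.isometry.dist_eq, h2] at h1
    have := Int.cast_injective h1
    simp at this
    linarith
  have d12 : (p2-p1)^2+(q2-q1)^2 = (c-a)^2+(d-b)^2 := by
    have h1 := dist_toPlane (p2,q2) (p1,q1)
    have h2 := dist_toPlane (c,d) (a,b)
    rw [← e1, ← e2, f.isometry.dist_eq, h2] at h1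
    have := Int.cast_injective h1
    simp at this
    linarith
  have hpos : 0 < a^2+b^2 := by
    have := h.1.2.2.1
    positivity
  have := combi h.1 h'.1 k0 k1 k2 (iso_case hpos d01 d02 (by nlinarith) hb)
  rcases this with h1 | ⟨h1, rfl, rfl, rfl, rfl⟩
  · exact h1
  · have s1 := h.2 h1
    have s2 := h'.2 (by have := h.1.2.2.2.2.1; omega)
    nlinarith

abbrev Quad : Type := ℕ × ℕ × ℕ × ℕ

def RR (M : ℕ) : Finset (Σ _ : ℕ, ℕ × (Σ _ : ℕ, ℕ)) :=
  (Finset.range M).sigma fun X => (Finset.range X) ×ˢ ((Finset.range X).sigma fun v => Finset.range v)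

lemma RR_card (M : ℕ) : 2 * (RR M).card = ∑ X ∈ Finset.range M, X * (X * (X-1)) := by
  simp only [RR, Finset.card_sigma, Finset.card_product, Finset.card_range, Finset.mul_sum]
  apply Finset.sum_congr rfl
  intro X _
  rw [← Finset.sum_range_id_mul_two X, Finset.sum_mul, ← Finset.mul_sum, ← Finset.mul_sum, ← Finset.sum_mul]
  ring

lemma RR_upper (M : ℕ) : 8 * (RR M).card ≤ M^4 := by
  have h : 4 * ∑ X ∈ Finset.range M, X * (X * (X-1)) ≤ M^4 := by
    induction M with
    | zero => simp
    | succ n ih =>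
      rw [Finset.sum_range_succ, mul_add]
      have : n * (n*(n-1)) ≤ n * (n * n) := by gcongr; omega
      nlinarith [Nat.zero_le n]
  have := RR_card M
  omega

lemma RR_lower (M : ℕ) : M^4 ≤ 8 * (RR M).card + 4 * M^3 := by
  have h : M^4 ≤ 4 * ∑ X ∈ Finset.range M, X * (X * (X-1)) + 4 * M^3 := by
    induction M with
    | zero => simp
    | succ n ih =>
      rw [Finset.sum_range_succ, mul_add]
      have : n * (n*(n-1)) + n*n = n * (n * n) := by
        rcases n with _ | n
        · simp
        · simp; ring
      nlinarith [Nat.zero_le n]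
  have := RR_card M
  omega

def box (N : ℕ) : Finset Quad :=
  Finset.range N ×ˢ Finset.range N ×ˢ Finset.range N ×ˢ Finset.range N

def SA (N : ℕ) : Finset Quad :=
  (box N).filter fun q => 0 < q.2.2.1 ∧ q.2.2.1 < q.1 ∧ 0 < q.2.1 ∧ q.2.1 < q.2.2.2 ∧ q.2.2.2 < q.1

def SB (N : ℕ) : Finset Quad :=
  (box N).filter fun q => 0 < q.2.2.1 ∧ q.2.2.1 < q.1 ∧ 0 < q.2.2.2 ∧ q.2.2.2 < q.2.1 ∧ q.2.1 < q.1

lemma mem_SA {N a b c d : ℕ} : (a,b,c,d) ∈ SA N ↔ a < N ∧ 0 < c ∧ c < a ∧ 0 < b ∧ b < d ∧ d < a := by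
  simp [SA, box]; omega

lemma mem_SB {N a b c d : ℕ} : (a,b,c,d) ∈ SB N ↔ a < N ∧ 0 < c ∧ c < a ∧ 0 < d ∧ d < b ∧ b < a := by
  simp [SB, box]; omega

lemma mem_RR {M X t v u : ℕ} : (⟨X, (t, ⟨v, u⟩)⟩ : Σ _ : ℕ, ℕ × (Σ _ : ℕ, ℕ)) ∈ RR M ↔
    X < M ∧ t < X ∧ v < X ∧ u < v := by
  simp [RR]

lemma SA_card (N : ℕ) : (RR (N-1)).card ≤ (SA N).card := by
  apply Finset.card_le_card_of_injOn (fun x => (x.1+1, x.2.2.2+1, x.2.1+1, x.2.2.1+1))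
  · rintro ⟨X, t, v, u⟩ h
    rw [Finset.mem_coe, mem_RR] at h
    rw [Finset.mem_coe, mem_SA]
    dsimp only
    omega
  · rintro ⟨X, t, v, u⟩ - ⟨X', t', v', u'⟩ - h
    simp at h
    obtain ⟨rfl, rfl, rfl, rfl⟩ := h
    rfl

lemma SB_card (N : ℕ) : (RR (N-1)).card ≤ (SB N).card := by
  apply Finset.card_le_card_of_injOn (fun x => (x.1+1, x.2.2.1+1, x.2.1+1, x.2.2.2+1))
  · rintro ⟨X, t, v, u⟩ h
    rw [Finset.mem_coe, mem_RR] at h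
    rw [Finset.mem_coe, mem_SB]
    dsimp only
    omega
  · rintro ⟨X, t, v, u⟩ - ⟨X', t', v', u'⟩ - h
    simp at h
    obtain ⟨rfl, rfl, rfl, rfl⟩ := h
    rfl

def badpr (p r : ℕ) (q : Quad) : Prop := p ∣ q.1 + r * q.2.1 ∧ p ∣ q.2.2.1 + r * q.2.2.2

instance (p r : ℕ) : DecidablePred (badpr p r) := fun q => by unfold badpr; infer_instance

lemma window {p c c' s s' : ℕ} (hs : s < p) (hs' : s' < p) (h : c + s = c' + s')
    (hd : (p:ℤ) ∣ (c:ℤ) - c') : c = c' ∧ s = s' := by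
  have : (c:ℤ) - c' = 0 := Int.eq_zero_of_abs_lt_dvd hd (by rw [abs_lt]; constructor <;> omega)
  omega

lemma win_x {p r c c' d : ℕ} (h : p ∣ c + r*d) (h' : p ∣ c' + r*d) : (p:ℤ) ∣ (c:ℤ) - c' := by
  have h1 : (p:ℤ) ∣ c + r*d := by exact_mod_cast h
  have h2 : (p:ℤ) ∣ c' + r*d := by exact_mod_cast h'
  have := dvd_sub h1 h2
  ring_nf at this ⊢
  exact this

lemma win_y {p r a b b' : ℕ} (hr : p ∣ r^2+1) (h : p ∣ a + r*b) (h' : p ∣ a + r*b') :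
    (p:ℤ) ∣ (b:ℤ) - b' := by
  have h1 : (p:ℤ) ∣ a + r*b := by exact_mod_cast h
  have h2 : (p:ℤ) ∣ a + r*b' := by exact_mod_cast h'
  have h3 : (p:ℤ) ∣ (r:ℤ)^2+1 := by exact_mod_cast hr
  have := dvd_sub h1 h2
  have h4 : (b:ℤ) - b' = (r^2+1)*(b-b') - r*((a + r*b) - (a+r*b')) := by ring
  rw [h4]
  exact dvd_sub (h3.mul_right _) (this.mul_left _)

lemma badA_small {N p r : ℕ} (hr : p ∣ r^2+1) :
    p^2 * ((SA N).filter (badpr p r)).card ≤ (RR (N+p)).card := by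
  have : p^2 * ((SA N).filter (badpr p r)).card =
      (((SA N).filter (badpr p r)) ×ˢ (Finset.range p ×ˢ Finset.range p)).card := by
    simp [Finset.card_product]; ring
  rw [this]
  apply Finset.card_le_card_of_injOn
    (fun x => ⟨x.1.1 + p, (x.1.2.2.1 + x.2.2, ⟨x.1.2.2.2 + p, x.1.2.1 + x.2.1⟩)⟩)
  · rintro ⟨⟨a, b, c, d⟩, s, t⟩ h
    rw [Finset.mem_coe, Finset.mem_product, Finset.mem_filter, mem_SA] at h
    simp only [Finset.mem_product, Finset.mem_range] at h
    rw [Finset.mem_coe, mem_RR]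
    dsimp only
    omega
  · rintro ⟨⟨a, b, c, d⟩, s, t⟩ h ⟨⟨a', b', c', d'⟩, s', t'⟩ h' e
    rw [Finset.mem_coe, Finset.mem_product, Finset.mem_filter, mem_SA] at h h'
    simp only [Finset.mem_product, Finset.mem_range, badpr] at h h'
    simp at e
    obtain ⟨rfl, e1, rfl, e2⟩ := e
    obtain ⟨rfl, rfl⟩ := window h.2.2 h'.2.2 e1 (win_x h.1.2.2 h'.1.2.2)
    obtain ⟨rfl, rfl⟩ := window h.2.1 h'.2.1 e2 (win_y hr h.1.2.1 h'.1.2.1)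
    rfl

lemma badB_small {N p r : ℕ} (hr : p ∣ r^2+1) :
    p^2 * ((SB N).filter (badpr p r)).card ≤ (RR (N+p)).card := by
  have : p^2 * ((SB N).filter (badpr p r)).card =
      (((SB N).filter (badpr p r)) ×ˢ (Finset.range p ×ˢ Finset.range p)).card := by
    simp [Finset.card_product]; ring
  rw [this]
  apply Finset.card_le_card_of_injOn
    (fun x => ⟨x.1.1 + p, (x.1.2.2.1 + x.2.2, ⟨x.1.2.1 + x.2.1, x.1.2.2.2⟩)⟩)
  · rintro ⟨⟨a, b, c, d⟩, s, t⟩ h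
    rw [Finset.mem_coe, Finset.mem_product, Finset.mem_filter, mem_SB] at h
    simp only [Finset.mem_product, Finset.mem_range] at h
    rw [Finset.mem_coe, mem_RR]
    dsimp only
    omega
  · rintro ⟨⟨a, b, c, d⟩, s, t⟩ h ⟨⟨a', b', c', d'⟩, s', t'⟩ h' e
    rw [Finset.mem_coe, Finset.mem_product, Finset.mem_filter, mem_SB] at h h'
    simp only [Finset.mem_product, Finset.mem_range, badpr] at h h'
    simp at e
    obtain ⟨rfl, e1, e2, rfl⟩ := e
    obtain ⟨rfl, rfl⟩ := window h.2.2 h'.2.2 e1 (win_x h.1.2.2 h'.1.2.2)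
    obtain ⟨rfl, rfl⟩ := window h.2.1 h'.2.1 e2 (win_y hr h.1.2.1 h'.1.2.1)
    rfl

def LatP (N p r : ℕ) : Finset (ℕ × ℕ) :=
  (Finset.range N ×ˢ Finset.range N).filter fun z => p ∣ z.1 + r * z.2

lemma LatP_card {N p r : ℕ} (hN : 7 ≤ N) (hr : p ∣ r^2+1) (hpN : p ≤ 2*N^2) :
    p * (LatP N p r).card ≤ 16 * N^2 := by
  set t := Nat.sqrt p with ht
  have t1 : t * t ≤ p := Nat.sqrt_le p
  have t2 : p < (t+1)*(t+1) := Nat.lt_succ_sqrt p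
  set s := t/2+1 with hs
  have s0 : 0 < s := by omega
  have s1 : 2*(s-1) ≤ t := by omega
  have s2 : t + 1 ≤ 2*s := by omega
  have s3 : s ≤ N := by
    by_contra h
    have : 2*N-2 < t := by omega
    obtain ⟨m, rfl⟩ : ∃ m, N = m+1 := ⟨N-1, by omega⟩
    have : 2*m < t := by omega
    nlinarith
  have hp0 : 0 < p := by
    rcases Nat.eq_zero_or_pos p with h | h
    · subst h; simp at hr
    · exact h
  have hcard : (LatP N p r).card ≤ (Finset.range (N/s+1) ×ˢ Finset.range (N/s+1)).card := by
    apply Finset.card_le_card_of_injOn (fun z => (z.1/s, z.2/s))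
    · rintro ⟨x, y⟩ h
      simp [LatP] at h
      simp only [Finset.coe_product, Set.mem_prod, Finset.mem_coe, Finset.mem_range]
      exact ⟨Nat.lt_succ_of_le (Nat.div_le_div_right h.1.1.le), Nat.lt_succ_of_le (Nat.div_le_div_right h.1.2.le)⟩
    · rintro ⟨x, y⟩ h ⟨x', y'⟩ h' e
      simp [LatP] at h h' e
      have h1 : (p:ℤ) ∣ x + r*y := by exact_mod_cast h.2
      have h2 : (p:ℤ) ∣ x' + r*y' := by exact_mod_cast h'.2
      have h3 : (p:ℤ) ∣ (r:ℤ)^2+1 := by exact_mod_cast hr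
      have h4 := dvd_sub h1 h2
      have h5 : (p:ℤ) ∣ ((x:ℤ)-x')^2 + ((y:ℤ)-y')^2 := by
        have : ((x:ℤ)-x')^2 + ((y:ℤ)-y')^2 = ((x + r*y) - (x' + r*y')) * ((x-x') - r*(y-y')) + (r^2+1)*(y-y')^2 := by ring
        rw [this]
        exact dvd_add (h4.mul_right _) (h3.mul_right _)
      have bd : ∀ u v : ℕ, u/s = v/s → ((u:ℤ)-v)^2 ≤ ((s-1 : ℕ):ℤ)^2 := by
        intro u v huv
        have a1 := Nat.div_add_mod u s
        have a2 := Nat.div_add_mod v s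
        have a3 := Nat.mod_lt u s0
        have a4 := Nat.mod_lt v s0
        rw [huv] at a1
        apply sq_le_sq'
        · omega
        · omega
      have b1 := bd x x' e.1
      have b2 := bd y y' e.2
      have b3 : 2*((s-1 : ℕ):ℤ)^2 < p := by
        have : 2*(s-1)^2 < p := by nlinarith
        exact_mod_cast this
      have h6 : ((x:ℤ)-x')^2 + ((y:ℤ)-y')^2 = 0 := by
        apply Int.eq_zero_of_abs_lt_dvd h5
        rw [abs_of_nonneg (by positivity)]
        linarith
      have h9 := (add_eq_zero_iff_of_nonneg (sq_nonneg ((x:ℤ)-x')) (sq_nonneg ((y:ℤ)-y'))).mp h6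
      have h7 : (x:ℤ)-x' = 0 := pow_eq_zero_iff two_ne_zero |>.mp h9.1
      have h8 : (y:ℤ)-y' = 0 := pow_eq_zero_iff two_ne_zero |>.mp h9.2
      have h7' : x = x' := by clear h1 h2 h3 h4 h5 b1 b2 b3 h6 h9; omega
      have h8' : y = y' := by clear h1 h2 h3 h4 h5 b1 b2 b3 h6 h9; omega
      rw [h7', h8']
  simp only [Finset.card_product, Finset.card_range] at hcard
  have k : s * (N/s+1) ≤ 2*N := by
    have := Nat.mul_div_le N s
    nlinarith
  calc p * (LatP N p r).card ≤ (2*s)*(2*s) * ((N/s+1)*(N/s+1)) := by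
        apply Nat.mul_le_mul _ hcard
        nlinarith
    _ = 4*((s * (N/s+1))*(s * (N/s+1))) := by ring
    _ ≤ 4*((2*N)*(2*N)) := by gcongr
    _ = 16*N^2 := by ring

lemma bad_large {N p r : ℕ} (hN : 7 ≤ N) (hr : p ∣ r^2+1) (hpN : p ≤ 2*N^2) :
    p^2 * ((box N).filter (badpr p r)).card ≤ 256 * N^4 := by
  have h : ((box N).filter (badpr p r)).card ≤ (LatP N p r ×ˢ LatP N p r).card := by
    apply Finset.card_le_card_of_injOn (fun q => ((q.1, q.2.1), (q.2.2.1, q.2.2.2)))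
    · rintro ⟨a, b, c, d⟩ h
      simp [box, badpr] at h
      simp [LatP]
      tauto
    · rintro ⟨a, b, c, d⟩ - ⟨a', b', c', d'⟩ - e
      simp at e
      obtain ⟨⟨rfl, rfl⟩, rfl, rfl⟩ := e
      rfl
  rw [Finset.card_product] at h
  have k := LatP_card hN hr hpN
  calc p^2 * ((box N).filter (badpr p r)).card ≤ p^2 * ((LatP N p r).card * (LatP N p r).card) := by gcongr
    _ = (p * (LatP N p r).card) * (p * (LatP N p r).card) := by ring
    _ ≤ (16*N^2)*(16*N^2) := by gcongr
    _ = 256*N^4 := by ring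

def PP (N : ℕ) : Finset ℕ := (Finset.range (2*N^2+1)).filter fun p => p.Prime ∧ p % 4 = 1

def rs (p : ℕ) : Finset ℕ := (Finset.range p).filter fun r => p ∣ r^2+1

lemma rs_card {p : ℕ} (hp : p.Prime) : (rs p).card ≤ 2 := by
  rcases (rs p).eq_empty_or_nonempty with h | ⟨r0, h0⟩
  · simp [h]
  · have : rs p ⊆ {r0, p - r0} := by
      intro r hr
      simp [rs] at hr h0
      have h1 : (p:ℤ) ∣ (r:ℤ)^2+1 := by exact_mod_cast hr.2
      have h2 : (p:ℤ) ∣ (r0:ℤ)^2+1 := by exact_mod_cast h0.2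
      have h3 : (p:ℤ) ∣ ((r:ℤ)-r0)*(r+r0) := by
        have := dvd_sub h1 h2
        ring_nf at this ⊢
        exact this
      simp only [Finset.mem_insert, Finset.mem_singleton]
      rcases (Nat.prime_iff_prime_int.mp hp).dvd_or_dvd h3 with h | h
      · left
        have := Int.eq_zero_of_abs_lt_dvd h (by rw [abs_lt]; constructor <;> omega)
        omega
      · have h : p ∣ r + r0 := by exact_mod_cast h
        obtain ⟨k, hk⟩ := h
        have : k < 2 := by
          by_contra hk2
          have : p*2 ≤ p*k := Nat.mul_le_mul_left _ (by omega)
          omega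
        interval_cases k
        · left; omega
        · right; omega
    exact (Finset.card_le_card this).trans Finset.card_le_two

def badN (N : ℕ) (q : Quad) : Prop := ∃ p ∈ PP N, ∃ r ∈ rs p, badpr p r q

instance (N : ℕ) : DecidablePred (badN N) := fun _ => Classical.dec _

lemma bad_union (N : ℕ) (S : Finset Quad) :
    (S.filter (badN N)).card ≤ ∑ p ∈ PP N, ∑ r ∈ rs p, (S.filter (badpr p r)).card := by
  have : S.filter (badN N) ⊆ (PP N).biUnion fun p => (rs p).biUnion fun r => S.filter (badpr p r) := by
    intro q hq
    simp only [Finset.mem_filter, badN] at hq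
    obtain ⟨h, p, hp, r, hr, hb⟩ := hq
    simp only [Finset.mem_biUnion, Finset.mem_filter]
    exact ⟨p, hp, r, hr, h, hb⟩
  refine (Finset.card_le_card this).trans (Finset.card_biUnion_le.trans ?_)
  exact Finset.sum_le_sum fun p _ => Finset.card_biUnion_le

lemma sum_k (k0 n : ℕ) (hk : 1 ≤ k0) :
    ∑ k ∈ Finset.Ico k0 (k0+n), 1/((4*k+1 : ℝ))^2 ≤ 1/(4*(4*k0-1)) - 1/(4*(4*((k0:ℝ)+n)-1)) := by
  induction n with
  | zero => simp
  | succ n ih =>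
    rw [← add_assoc, Finset.sum_Ico_succ_top (by omega)]
    have hk' : (1:ℝ) ≤ k0 := by exact_mod_cast hk
    have hn : (0:ℝ) ≤ n := by positivity
    have : 1/((4*((k0+n : ℕ):ℝ)+1 : ℝ))^2 ≤ 1/(4*(4*((k0:ℝ)+n)-1)) - 1/(4*(4*((k0:ℝ)+(n+1 : ℕ))-1)) := by
      push_cast
      generalize hx : (k0:ℝ)+n = x
      have hx1 : 1 ≤ x := by linarith
      rw [show (k0:ℝ)+(n+1) = x+1 by linarith]
      have e : 1/(4*(4*x-1)) - 1/(4*(4*(x+1)-1)) = 1/((4*x-1)*(4*x+3)) := by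
        have : 4*x-1 ≠ 0 := by linarith
        have : 4*(x+1)-1 ≠ 0 := by linarith
        have : 4*x+3 ≠ 0 := by linarith
        field_simp; ring
      rw [e]
      apply one_div_le_one_div_of_le
      · apply mul_pos <;> linarith
      · nlinarith
    linarith

lemma sum_sq (P : Finset ℕ) (m : ℕ) (hm : 4 ≤ m) (h : ∀ p ∈ P, p % 4 = 1 ∧ m < p) :
    ∑ p ∈ P, 1/((p:ℝ))^2 ≤ 1/(4*((m:ℝ)-1)) := by
  set k0 := (m+3)/4 with hk0
  obtain ⟨n, hn⟩ : ∃ n, ∀ p ∈ P, p < n := ⟨P.sup id + 1, fun p hp => Nat.lt_succ_of_le (Finset.le_sup (f := id) hp)⟩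
  have hsub : P ⊆ (Finset.Ico k0 (k0+n)).image (fun k : ℕ => (4*k+1 : ℕ)) := by
    intro p hp
    have h1 := h p hp
    have h2 := hn p hp
    simp only [Finset.mem_image, Finset.mem_Ico]
    exact ⟨p/4, by omega, by omega⟩
  calc ∑ p ∈ P, 1/((p:ℝ))^2 ≤ ∑ p ∈ (Finset.Ico k0 (k0+n)).image (fun k : ℕ => (4*k+1 : ℕ)), 1/((p:ℝ))^2 :=
        Finset.sum_le_sum_of_subset_of_nonneg hsub (fun _ _ _ => by positivity)
    _ = ∑ k ∈ Finset.Ico k0 (k0+n), 1/((4*k+1 : ℝ))^2 := by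
        have hinj : Set.InjOn (fun k : ℕ => (4*k+1 : ℕ)) (Finset.Ico k0 (k0+n) : Set ℕ) := by
          intro a _ b _ hab
          have : 4*a+1 = 4*b+1 := hab
          omega
        rw [Finset.sum_image hinj]
        push_cast; rfl
    _ ≤ 1/(4*(4*k0-1)) - 1/(4*(4*((k0:ℝ)+n)-1)) := sum_k k0 n (by omega)
    _ ≤ 1/(4*(4*k0-1)) := by
        have hk' : (1:ℝ) ≤ k0 := by exact_mod_cast (by omega : 1 ≤ k0)
        have hn : (0:ℝ) ≤ n := by positivity
        have : 0 ≤ 1/(4*(4*((k0:ℝ)+n)-1)) := by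
          apply one_div_nonneg.mpr; linarith
        linarith
    _ ≤ 1/(4*((m:ℝ)-1)) := by
        have hm' : (4:ℝ) ≤ m := by exact_mod_cast hm
        have : (m:ℝ) ≤ 4*k0 := by exact_mod_cast (by omega : m ≤ 4*k0)
        apply one_div_le_one_div_of_le <;> linarith

lemma bad_total {N : ℕ} (hN : 2000 ≤ N) (S : Finset Quad) (hS : S ⊆ box N)
    (hsmall : ∀ p r, p ∣ r^2+1 → p^2 * (S.filter (badpr p r)).card ≤ (RR (N+p)).card) :
    ((S.filter (badN N)).card : ℝ) ≤ (1.0102/48) * N^4 + 51200 * N^4 / ((N:ℝ)-800) := by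
  have hN' : (2000:ℝ) ≤ N := by exact_mod_cast hN
  set m := N/400 with hm
  set c1 : ℝ := 1.0102/4 * N^4 with hc1
  set c2 : ℝ := 512 * N^4 with hc2
  have b1 : ∀ p ∈ PP N, p ≤ m → ((∑ r ∈ rs p, (S.filter (badpr p r)).card : ℕ):ℝ) ≤ c1 * (1/(p:ℝ)^2) := by
    intro p hp hpm
    simp [PP] at hp
    have hp0 : (0:ℝ) < p := by exact_mod_cast hp.2.1.pos
    have h1 : ∀ r ∈ rs p, ((S.filter (badpr p r)).card:ℝ) ≤ 1.0102/8 * N^4 * (1/(p:ℝ)^2) := by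
      intro r hr
      simp [rs] at hr
      have k1 := hsmall p r hr.2
      have k2 := RR_upper (N+p)
      have k3 : 8 * (p^2 * (S.filter (badpr p r)).card) ≤ (N+p)^4 := by omega
      have k4 : 8 * ((p:ℝ)^2 * ((S.filter (badpr p r)).card:ℝ)) ≤ ((N:ℝ)+p)^4 := by exact_mod_cast k3
      have k5 : (p:ℝ) ≤ N/400 := by
        rw [le_div_iff₀ (by norm_num)]
        exact_mod_cast (by omega : p*400 ≤ N)
      have k6 : ((N:ℝ)+p)^4 ≤ (1.0025*N)^4 := by
        gcongr; linarith
      have k7 : (1.0025*(N:ℝ))^4 ≤ 1.0102*N^4 := by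
        rw [mul_pow]; gcongr; norm_num
      rw [mul_one_div, le_div_iff₀ (by positivity)]
      linarith
    push_cast
    calc ∑ r ∈ rs p, ((S.filter (badpr p r)).card:ℝ) ≤ ∑ r ∈ rs p, 1.0102/8 * N^4 * (1/(p:ℝ)^2) := Finset.sum_le_sum h1
      _ = (rs p).card * (1.0102/8 * N^4 * (1/(p:ℝ)^2)) := by simp
      _ ≤ 2 * (1.0102/8 * N^4 * (1/(p:ℝ)^2)) := by
        gcongr
        exact_mod_cast rs_card hp.2.1
      _ = c1 * (1/(p:ℝ)^2) := by rw [hc1]; ring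
  have b2 : ∀ p ∈ PP N, ((∑ r ∈ rs p, (S.filter (badpr p r)).card : ℕ):ℝ) ≤ c2 * (1/(p:ℝ)^2) := by
    intro p hp
    simp [PP] at hp
    have hp0 : (0:ℝ) < p := by exact_mod_cast hp.2.1.pos
    have h1 : ∀ r ∈ rs p, ((S.filter (badpr p r)).card:ℝ) ≤ 256 * N^4 * (1/(p:ℝ)^2) := by
      intro r hr
      simp [rs] at hr
      have k1 := bad_large (N := N) (by omega) hr.2 (by omega)
      have k2 : p^2 * (S.filter (badpr p r)).card ≤ p^2 * ((box N).filter (badpr p r)).card := by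
        gcongr
      have k4 : (p:ℝ)^2 * ((S.filter (badpr p r)).card:ℝ) ≤ 256*(N:ℝ)^4 := by exact_mod_cast k2.trans k1
      rw [mul_one_div, le_div_iff₀ (by positivity)]
      linarith
    push_cast
    calc ∑ r ∈ rs p, ((S.filter (badpr p r)).card:ℝ) ≤ ∑ r ∈ rs p, 256 * N^4 * (1/(p:ℝ)^2) := Finset.sum_le_sum h1
      _ = (rs p).card * (256 * N^4 * (1/(p:ℝ)^2)) := by simp
      _ ≤ 2 * (256 * N^4 * (1/(p:ℝ)^2)) := by
        gcongr
        exact_mod_cast rs_card hp.2.1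
      _ = c2 * (1/(p:ℝ)^2) := by rw [hc2]; ring
  have hb : ((S.filter (badN N)).card : ℝ) ≤ ∑ p ∈ PP N, ((∑ r ∈ rs p, (S.filter (badpr p r)).card : ℕ):ℝ) := by
    exact_mod_cast bad_union N S
  rw [← Finset.sum_filter_add_sum_filter_not (PP N) (fun p => p ≤ m)] at hb
  have s1 : ∑ p ∈ (PP N).filter (fun p => p ≤ m), ((∑ r ∈ rs p, (S.filter (badpr p r)).card : ℕ):ℝ) ≤ c1 * (1/12) := by
    calc _ ≤ ∑ p ∈ (PP N).filter (fun p => p ≤ m), c1 * (1/(p:ℝ)^2) := by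
          apply Finset.sum_le_sum
          intro p hp
          rw [Finset.mem_filter] at hp
          exact b1 p hp.1 hp.2
      _ = c1 * ∑ p ∈ (PP N).filter (fun p => p ≤ m), (1/(p:ℝ)^2) := by rw [Finset.mul_sum]
      _ ≤ c1 * (1/12) := by
          apply mul_le_mul_of_nonneg_left _ (by positivity)
          refine (sum_sq _ 4 le_rfl ?_).trans (by norm_num)
          intro p hp
          simp [PP] at hp
          have := hp.1.2.1.two_le
          omega
  have s2 : ∑ p ∈ (PP N).filter (fun p => ¬ p ≤ m), ((∑ r ∈ rs p, (S.filter (badpr p r)).card : ℕ):ℝ) ≤ c2 * (100/((N:ℝ)-800)) := by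
    calc _ ≤ ∑ p ∈ (PP N).filter (fun p => ¬ p ≤ m), c2 * (1/(p:ℝ)^2) := by
          apply Finset.sum_le_sum
          intro p hp
          rw [Finset.mem_filter] at hp
          exact b2 p hp.1
      _ = c2 * ∑ p ∈ (PP N).filter (fun p => ¬ p ≤ m), (1/(p:ℝ)^2) := by rw [Finset.mul_sum]
      _ ≤ c2 * (100/((N:ℝ)-800)) := by
          apply mul_le_mul_of_nonneg_left _ (by positivity)
          refine (sum_sq _ m (by omega) ?_).trans ?_
          · intro p hp
            simp [PP] at hp
            omega
          · have : (N:ℝ) ≤ 400*m+400 := by exact_mod_cast (by omega : N ≤ 400*m+400)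
            rw [div_le_div_iff₀ (by linarith) (by linarith)]
            linarith
  have e1 : c1 * (1/12) = (1.0102/48) * N^4 := by rw [hc1]; ring
  have e2 : c2 * (100/((N:ℝ)-800)) = 51200 * N^4 / ((N:ℝ)-800) := by rw [hc2]; ring
  linarith

lemma Cong.refl' (S : Set Plane) : Cong S S := ⟨IsometryEquiv.refl _, Set.image_id _⟩

lemma Cong.symm' {S S' : Set Plane} (h : Cong S S') : Cong S' S := by
  obtain ⟨f, rfl⟩ := h
  refine ⟨f.symm, ?_⟩
  rw [← Set.image_comp]
  simp

lemma Cong.trans' {S S' S'' : Set Plane} (h : Cong S S') (h' : Cong S' S'') : Cong S S'' := by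
  obtain ⟨f, rfl⟩ := h
  obtain ⟨g, rfl⟩ := h'
  refine ⟨f.trans g, ?_⟩
  rw [← Set.image_comp]
  rfl

lemma cong_translate (a b c : ℤ × ℤ) :
    Cong {toPlane a, toPlane b, toPlane c} (tri (b.1-a.1) (b.2-a.2) (c.1-a.1) (c.2-a.2)) := by
  refine ⟨IsometryEquiv.subRight (toPlane a), ?_⟩
  have key : ∀ P : ℤ × ℤ, toPlane P - toPlane a = toPlane (P.1-a.1, P.2-a.2) := by
    intro P
    ext i
    fin_cases i <;> simp [toPlane, pt]
  have z : toPlane (0,0) = 0 := by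
    ext i
    fin_cases i <;> simp [toPlane, pt]
  simp [Set.image_insert_eq, tri, key, z]

lemma T_sub (N : ℕ) : ((fun t => {t' ∈ gridTriples N | Cong t t'}) '' gridTriples N) ⊆
    (((Finset.Icc (-(N:ℤ)) N ×ˢ Finset.Icc (-(N:ℤ)) N ×ˢ Finset.Icc (-(N:ℤ)) N ×ˢ Finset.Icc (-(N:ℤ)) N :
      Finset (ℤ × ℤ × ℤ × ℤ))) : Set (ℤ × ℤ × ℤ × ℤ)).image
      (fun q => {t' ∈ gridTriples N | Cong (tri q.1 q.2.1 q.2.2.1 q.2.2.2) t'}) := by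
  rintro _ ⟨t, ⟨a, b, c, ha, hb, hc, -, -, -, rfl⟩, rfl⟩
  refine ⟨(b.1-a.1, b.2-a.2, c.1-a.1, c.2-a.2), ?_, ?_⟩
  · simp only [inGrid] at ha hb hc
    simp only [Finset.coe_product, Set.mem_prod, Finset.mem_coe, Finset.mem_Icc]
    omega
  · have := cong_translate a b c
    ext t'
    simp only [Set.mem_ofPred_eq]
    constructor
    · rintro ⟨h1, h2⟩; exact ⟨h1, this.trans' h2⟩
    · rintro ⟨h1, h2⟩; exact ⟨h1, this.symm'.trans' h2⟩

lemma T_fin (N : ℕ) : ((fun t => {t' ∈ gridTriples N | Cong t t'}) '' gridTriples N).Finite :=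
  ((Finset.finite_toSet _).image _).subset (T_sub N)

lemma T_upper (N : ℕ) : T N ≤ (2*N+1)^4 := by
  unfold T
  refine (Set.ncard_le_ncard (T_sub N) ((Finset.finite_toSet _).image _)).trans ?_
  refine (Set.ncard_image_le (Finset.finite_toSet _)).trans ?_
  rw [Set.ncard_coe_finset]
  simp only [Finset.card_product, Int.card_Icc]
  have : ((N:ℤ) + 1 - -(N:ℤ)).toNat = 2*N+1 := by omega
  rw [this]
  apply le_of_eq; ring

def qtri (q : Quad) : Set Plane := tri q.1 q.2.1 q.2.2.1 q.2.2.2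

lemma T_lower (N : ℕ) (G : Finset Quad) (h1 : ∀ q ∈ G, qtri q ∈ gridTriples N)
    (h2 : ∀ q ∈ G, ∀ q' ∈ G, Cong (qtri q) (qtri q') → q = q') : G.card ≤ T N := by
  have hinj : Set.InjOn (fun q => {t' ∈ gridTriples N | Cong (qtri q) t'}) (G : Set Quad) := by
    intro q hq q' hq' e
    have : qtri q' ∈ {t' ∈ gridTriples N | Cong (qtri q') t'} := ⟨h1 q' hq', Cong.refl' _⟩
    have e' : {t' ∈ gridTriples N | Cong (qtri q) t'} = {t' ∈ gridTriples N | Cong (qtri q') t'} := e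
    rw [← e'] at this
    exact h2 q hq q' hq' this.2
  unfold T
  rw [← Set.ncard_coe_finset, ← hinj.ncard_image]
  apply Set.ncard_le_ncard _ (T_fin N)
  rintro _ ⟨q, hq, rfl⟩
  exact ⟨qtri q, h1 q hq, rfl⟩

def GA (N : ℕ) : Finset Quad := (SA N).filter fun q => ¬ badN N q
def GB (N : ℕ) : Finset Quad := (SB N).filter fun q => ¬ badN N q
def GB1 (N : ℕ) : Finset Quad := (GB N).filter fun q => q.2.2.2 * q.1 < q.2.2.1 * q.2.1
def GB2 (N : ℕ) : Finset Quad := (GB N).filter fun q => q.2.2.1 * q.2.1 < q.2.2.2 * q.1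
def GB3 (N : ℕ) : Finset Quad := (GB N).filter fun q => q.2.2.1 * q.2.1 = q.2.2.2 * q.1

lemma GB3_card (N : ℕ) : (GB3 N).card ≤ N^3 := by
  have : N^3 = (Finset.range N ×ˢ Finset.range N ×ˢ Finset.range N).card := by simp; ring
  rw [this]
  apply Finset.card_le_card_of_injOn (fun q => (q.1, q.2.1, q.2.2.2))
  · rintro ⟨a, b, c, d⟩ h
    simp only [GB3, GB, Finset.mem_coe, Finset.mem_filter, mem_SB] at h
    simp
    omega
  · rintro ⟨a, b, c, d⟩ h ⟨a', b', c', d'⟩ h' e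
    simp only [GB3, GB, Finset.mem_coe, Finset.mem_filter, mem_SB] at h h'
    simp at e
    obtain ⟨rfl, rfl, rfl⟩ := e
    have : c = c' := Nat.eq_of_mul_eq_mul_right (by omega : 0 < b) (h.2.trans h'.2.symm)
    rw [this]

lemma bad_flip {N a b c d : ℕ} (hc : c ≤ a) (hd : d ≤ b) (h : badN N (a, b, a-c, b-d)) :
    badN N (a,b,c,d) := by
  obtain ⟨p, hp, r, hr, h1, h2⟩ := h
  refine ⟨p, hp, r, hr, h1, ?_⟩
  dsimp only at h1 h2 ⊢
  have e : a + r*b = (c + r*d) + ((a-c) + r*(b-d)) := by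
    obtain ⟨u, rfl⟩ := Nat.exists_eq_add_of_le hc
    obtain ⟨v, rfl⟩ := Nat.exists_eq_add_of_le hd
    simp; ring
  rw [e] at h1
  exact (Nat.dvd_add_left h2).mp h1

lemma GB2_card (N : ℕ) : (GB2 N).card ≤ (GB1 N).card := by
  apply Finset.card_le_card_of_injOn (fun q => (q.1, q.2.1, q.1 - q.2.2.1, q.2.1 - q.2.2.2))
  · rintro ⟨a, b, c, d⟩ h
    simp only [GB2, GB, Finset.mem_coe, Finset.mem_filter, mem_SB] at h
    simp only [GB1, GB, Finset.mem_coe, Finset.mem_filter, mem_SB]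
    refine ⟨⟨by omega, fun hb => h.1.2 (bad_flip (by omega) (by omega) hb)⟩, ?_⟩
    obtain ⟨u, rfl⟩ := Nat.exists_eq_add_of_le (by omega : c ≤ a)
    obtain ⟨v, rfl⟩ := Nat.exists_eq_add_of_le (by omega : d ≤ b)
    simp only [Nat.add_sub_cancel_left]
    have := h.2
    nlinarith
  · rintro ⟨a, b, c, d⟩ h ⟨a', b', c', d'⟩ h' e
    simp only [GB2, GB, Finset.mem_coe, Finset.mem_filter, mem_SB] at h h'
    simp only [Prod.mk.injEq] at e ⊢
    omega

lemma GB_split (N : ℕ) : (GB N).card ≤ 2 * (GB1 N).card + N^3 := by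
  have : GB N ⊆ (GB1 N ∪ GB2 N) ∪ GB3 N := by
    intro q hq
    simp only [GB1, GB2, GB3, Finset.mem_union, Finset.mem_filter, hq, true_and]
    omega
  have h1 := Finset.card_le_card this
  have h2 := Finset.card_union_le (GB1 N ∪ GB2 N) (GB3 N)
  have h3 := Finset.card_union_le (GB1 N) (GB2 N)
  have := GB3_card N
  have := GB2_card N
  omega

lemma not_badZ {N a b c d : ℕ} (hN : a < N ∧ b < a ∧ 0 < b) (h : ¬ badN N (a,b,c,d)) : ¬ BadZ a b c d := by
  rintro ⟨p, r, hp, hp4, hr, hd, h1, h2⟩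
  apply h
  have h1' : p ∣ a + r*b := by exact_mod_cast h1
  have h2' : p ∣ c + r*d := by exact_mod_cast h2
  refine ⟨p, ?_, r, ?_, h1', h2'⟩
  · have : (p:ℤ) ∣ (a:ℤ)^2+(b:ℤ)^2 := by
      have e : (a:ℤ)^2+(b:ℤ)^2 = (a + r*b)*(a - r*b) + (r^2+1)*b^2 := by ring
      rw [e]
      have h3 : (p:ℤ) ∣ (r:ℤ)^2+1 := by exact_mod_cast hd
      exact dvd_add (h1.mul_right _) (h3.mul_right _)
    have h5 : p ∣ a^2+b^2 := by exact_mod_cast this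
    have h6 := Nat.le_of_dvd (by have := hN.2.2; positivity) h5
    have h7 : a^2 ≤ N^2 := Nat.pow_le_pow_left hN.1.le 2
    have h8 : b^2 ≤ N^2 := Nat.pow_le_pow_left (by omega) 2
    simp only [PP, Finset.mem_filter, Finset.mem_range]
    exact ⟨by omega, hp, hp4⟩
  · simp only [rs, Finset.mem_filter, Finset.mem_range]
    exact ⟨hr, hd⟩

lemma G_spec {N a b c d : ℕ} (h : (a,b,c,d) ∈ GA N ∪ GB1 N) :
    Shape a b c d ∧ ¬ BadZ a b c d ∧ a < N := by
  simp only [Finset.mem_union, GA, GB1, GB, Finset.mem_filter, mem_SA, mem_SB] at h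
  rcases h with h | h
  · refine ⟨⟨by unfold Lin; omega, fun h' => ?_⟩, not_badZ (by omega) h.2, by omega⟩
    omega
  · refine ⟨⟨by unfold Lin; omega, fun h' => ?_⟩, not_badZ (by omega) h.1.2, by omega⟩
    exact_mod_cast h.2

lemma G_card (N : ℕ) : (GA N).card + (GB1 N).card ≤ T N := by
  have hdis : Disjoint (GA N) (GB1 N) := by
    rw [Finset.disjoint_left]
    rintro ⟨a, b, c, d⟩ h h'
    simp only [GA, GB1, GB, Finset.mem_filter, mem_SA, mem_SB] at h h'
    omega
  rw [← Finset.card_union_of_disjoint hdis]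
  apply T_lower
  · rintro ⟨a, b, c, d⟩ h
    obtain ⟨⟨h1, -⟩, -, h3⟩ := G_spec h
    unfold Lin at h1
    refine ⟨(0,0), (a,b), (c,d), ?_, ?_, ?_, ?_, ?_, ?_, rfl⟩
    · simp only [inGrid]; omega
    · simp only [inGrid]; omega
    · simp only [inGrid]; omega
    all_goals
      simp only [ne_eq, Prod.mk.injEq]
      omega
  · rintro ⟨a, b, c, d⟩ h ⟨a', b', c', d'⟩ h' hc
    have g := G_spec h
    have g' := G_spec h'
    have := cong_tri g.1 g'.1 g.2.1 hc
    simp only [Prod.mk.injEq]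
    omega

lemma T_bound {N : ℕ} (hN : 10^10 ≤ N) : 0.1558 ≤ (T N : ℝ) / (N:ℝ)^4 := by
  have hN' : (10:ℝ)^10 ≤ N := by exact_mod_cast hN
  have hA := bad_total (N := N) (by omega) (SA N) (Finset.filter_subset _ _) (fun p r h => badA_small h)
  have hB := bad_total (N := N) (by omega) (SB N) (Finset.filter_subset _ _) (fun p r h => badB_small h)
  have a1 : ((SA N).filter (badN N)).card + (GA N).card = (SA N).card :=
    Finset.card_filter_add_card_filter_not _
  have b1 : ((SB N).filter (badN N)).card + (GB N).card = (SB N).card :=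
    Finset.card_filter_add_card_filter_not _
  have a1' : (((SA N).filter (badN N)).card : ℝ) + (GA N).card = (SA N).card := by exact_mod_cast a1
  have b1' : (((SB N).filter (badN N)).card : ℝ) + (GB N).card = (SB N).card := by exact_mod_cast b1
  have r := RR_lower (N-1)
  have r' : ((N:ℝ)-1)^4 ≤ 8 * (RR (N-1)).card + 4 * ((N:ℝ)-1)^3 := by
    have : ((N-1 : ℕ):ℝ) = (N:ℝ)-1 := by
      rw [Nat.cast_sub (by omega)]; simp
    rw [← this]
    exact_mod_cast r
  have sa : ((RR (N-1)).card:ℝ) ≤ (SA N).card := by exact_mod_cast SA_card N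
  have sb : ((RR (N-1)).card:ℝ) ≤ (SB N).card := by exact_mod_cast SB_card N
  have g : ((GB N).card:ℝ) ≤ 2 * (GB1 N).card + (N:ℝ)^3 := by exact_mod_cast GB_split N
  have t : ((GA N).card:ℝ) + (GB1 N).card ≤ T N := by exact_mod_cast G_card N
  have n4 : (N:ℝ)^4 = N * N^3 := by ring
  have n3 : (0:ℝ) ≤ (N:ℝ)^3 := by positivity
  have big : (10:ℝ)^10 * N^3 ≤ N^4 := by rw [n4]; gcongr
  have r2 : (N:ℝ)^4 - 8 * N^3 ≤ 8 * (RR (N-1)).card := by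
    have : ((N:ℝ)-1)^4 - 4 * ((N:ℝ)-1)^3 = N^4 - 8*N^3 + (18*N^2 - 16 * N + 5) := by ring
    have : (0:ℝ) ≤ 18*N^2 - 16 * N + 5 := by nlinarith
    linarith
  have tail : 51200 * (N:ℝ)^4 / ((N:ℝ)-800) ≤ 0.00001 * N^4 := by
    rw [div_le_iff₀ (by linarith)]
    have : (0:ℝ) ≤ (N:ℝ)^4 := by positivity
    nlinarith
  have hpos : (0:ℝ) < (N:ℝ)^4 := by
    have : (0:ℝ) < N := by linarith
    positivity
  rw [le_div_iff₀ hpos]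
  norm_num at big hA hB tail ⊢
  linarith

theorem grid_triangles_liminf :
    0.1558 ≤ Filter.liminf (fun N : ℕ => (T N : ℝ) / (N : ℝ) ^ 4) Filter.atTop := by
  have hbdd : Filter.IsBoundedUnder (· ≤ ·) Filter.atTop (fun N : ℕ => (T N : ℝ) / (N : ℝ) ^ 4) := by
    refine ⟨81, ?_⟩
    rw [Filter.eventually_map]
    filter_upwards [Filter.eventually_ge_atTop 1] with N hN
    have hN' : (1:ℝ) ≤ N := by exact_mod_cast hN
    have h : (T N : ℝ) ≤ (2*(N:ℝ)+1)^4 := by exact_mod_cast T_upper N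
    have h2 : (2*(N:ℝ)+1)^4 ≤ (3*N)^4 := by gcongr; linarith
    rw [div_le_iff₀ (by positivity)]
    have : (3*(N:ℝ))^4 = 81 * N^4 := by ring
    linarith
  refine Filter.le_liminf_of_le hbdd.isCoboundedUnder_ge ?_
  filter_upwards [Filter.eventually_ge_atTop (10^10)] with N hN
  exact T_bound hN
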